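/- arXiv:0803.3377 — 3 statements merged into one kernel-verified Lean document; each statement's English description precedes it below -/
import Mathlib

section
/- Let K ⊂ ℝ³ be a compact set and let A ≥ B ≥ 0 be real numbers. Let u, φ : ℝ³ → ℝ be functions which are continuous on the closure of ℝ³ \ K and twice continuously differentiable on the open set ℝ³ \ K, with u(x) ≥ 0 and φ(x) ≥ 0 for all x ∈ ℝ³ \ K. Assume that Δu(x) ≥ A u(x) and Δφ(x) ≤ B φ(x) for all x in ℝ³ \ K, that u(x) ≤ φ(x) for all x on the boundary ∂K, and that u(x) → 0 and φ(x) → 0 as |x| → ∞. Then u(x) ≤ φ(x) for all x ∈ ℝ³ \ K. -/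
open MeasureTheory Filter Set

/-- The Laplacian `Δf = ∑_{j=1}^{3} ∂²f/∂x_j²` of a function on `ℝ³`. -/
noncomputable def laplacian (f : EuclideanSpace ℝ (Fin 3) → ℝ)
    (x : EuclideanSpace ℝ (Fin 3)) : ℝ :=
  ∑ i : Fin 3,
    fderiv ℝ (fun y => fderiv ℝ f y (EuclideanSpace.single i 1)) x (EuclideanSpace.single i 1)

/-!
Fix `c > 0` and let `w = u - φ`. On the open set where `w > c` one has
`Δw ≥ A u - B φ = (A - B) u + B w ≥ 0`, so `w` is subharmonic there. That set is bounded because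
`w → 0` at infinity, and `w ≤ c` on its boundary, because it stays away from `∂K`, where `w ≤ 0`.
The weak maximum principle gives `w ≤ c` on the set, which is therefore empty. The weak maximum
principle itself follows by adding `ε ‖x‖²`: the Laplacian of the sum is positive, while it would be
nonpositive at an interior maximum.
-/

open scoped Laplacian Topology

section SecondDerivativeTest

theorem deriv_deriv_nonpos_of_isLocalMax {f : ℝ → ℝ} {a : ℝ} (hf : ContinuousAt f a)
    (hmax : IsLocalMax f a) : deriv (deriv f) a ≤ 0 := by
  by_contra! hpos
  have hmin : IsLocalMin f a := isLocalMin_of_deriv_deriv_pos hpos hmax.deriv_eq_zero hf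
  have hconst : f =ᶠ[𝓝 a] fun _ => f a := by
    filter_upwards [hmax, hmin] with t hle hge using le_antisymm hle hge
  have hzero : deriv (deriv f) a = 0 := by
    rw [hconst.deriv.deriv_eq]
    simp
  exact hpos.ne' hzero

theorem deriv_deriv_comp_add_smul {E F : Type*} [NormedAddCommGroup E] [NormedSpace ℝ E]
    [NormedAddCommGroup F] [NormedSpace ℝ F] {f : E → F} {x : E} (hf : ContDiffAt ℝ 2 f x)
    (v : E) :
    deriv (deriv fun t : ℝ => f (x + t • v)) 0 = fderiv ℝ (fderiv ℝ f) x v v := by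
  have hline (t : ℝ) : HasDerivAt (fun t : ℝ => x + t • v) v t := by
    simpa using ((hasDerivAt_id t).smul_const v).const_add x
  have hzero : x + (0 : ℝ) • v = x := by simp
  have hlim : Tendsto (fun t : ℝ => x + t • v) (𝓝 0) (𝓝 x) := by
    simpa only [ContinuousAt, hzero] using (hline 0).continuousAt
  have hderiv : deriv (fun t : ℝ => f (x + t • v)) =ᶠ[𝓝 0] fun t => fderiv ℝ f (x + t • v) v := by
    filter_upwards [hlim.eventually (hf.eventually (by simp))] with t ht
    exact ((ht.differentiableAt two_ne_zero).hasFDerivAt.comp_hasDerivAt t (hline t)).deriv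
  have hdiff : HasFDerivAt (fderiv ℝ f) (fderiv ℝ (fderiv ℝ f) x) x :=
    ((hf.fderiv_right (m := 1) (by norm_num)).differentiableAt one_ne_zero).hasFDerivAt
  have hsecond : HasDerivAt (fun t : ℝ => fderiv ℝ f (x + t • v))
      (fderiv ℝ (fderiv ℝ f) x v) 0 :=
    hdiff.comp_hasDerivAt_of_eq 0 (hline 0) hzero.symm
  rw [hderiv.deriv_eq, (hsecond.clm_apply (hasDerivAt_const 0 v)).deriv, map_zero, add_zero]

theorem fderiv_fderiv_nonpos_of_isLocalMax {E : Type*} [NormedAddCommGroup E] [NormedSpace ℝ E]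
    {f : E → ℝ} {x : E} (hf : ContDiffAt ℝ 2 f x) (hmax : IsLocalMax f x) (v : E) :
    fderiv ℝ (fderiv ℝ f) x v v ≤ 0 := by
  let line : ℝ → E := fun t => x + t • v
  have hline : ContinuousAt line 0 := by fun_prop
  have hzero : line 0 = x := by simp [line]
  have hmax_line : IsLocalMax f (line 0) := hzero.symm ▸ hmax
  rw [← deriv_deriv_comp_add_smul hf v]
  exact deriv_deriv_nonpos_of_isLocalMax (hf.continuousAt.comp_of_eq hline hzero)
    (hmax_line.comp_continuous hline)

end SecondDerivativeTest

variable {E : Type*} [NormedAddCommGroup E] [InnerProductSpace ℝ E] [FiniteDimensional ℝ E]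

section EuclideanLaplacian

theorem laplacian_eq_sum_fderiv_fderiv {F ι : Type*} [NormedAddCommGroup F] [NormedSpace ℝ F]
    [Fintype ι] (f : E → F) (b : OrthonormalBasis ι ℝ E) (x : E) :
    Δ f x = ∑ i, fderiv ℝ (fderiv ℝ f) x (b i) (b i) := by
  simp [InnerProductSpace.laplacian_eq_iteratedFDeriv_orthonormalBasis f b,
    iteratedFDeriv_two_apply]

theorem laplacian_nonpos_of_isLocalMax {f : E → ℝ} {x : E} (hf : ContDiffAt ℝ 2 f x)
    (hmax : IsLocalMax f x) : Δ f x ≤ 0 := by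
  rw [laplacian_eq_sum_fderiv_fderiv f (stdOrthonormalBasis ℝ E)]
  exact Finset.sum_nonpos fun i _ => fderiv_fderiv_nonpos_of_isLocalMax hf hmax _

theorem laplacian_norm_sq (x : E) :
    Δ (fun y : E => ‖y‖ ^ 2) x = 2 * Module.finrank ℝ E := by
  have hsecond (v : E) : fderiv ℝ (fderiv ℝ fun y : E => ‖y‖ ^ 2) x v v = 2 * ‖v‖ ^ 2 := by
    have hderiv : HasFDerivAt (fderiv ℝ fun y : E => ‖y‖ ^ 2) (2 • innerSL ℝ (E := E)) x :=
      fderiv_norm_sq (F := E) ▸ (2 • innerSL ℝ (E := E)).hasFDerivAt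
    calc fderiv ℝ (fderiv ℝ fun y : E => ‖y‖ ^ 2) x v v
        = (2 • innerSL ℝ (E := E)) v v := by rw [hderiv.fderiv]
      _ = 2 * ‖v‖ ^ 2 := by simp
  simp [laplacian_eq_sum_fderiv_fderiv _ (stdOrthonormalBasis ℝ E), hsecond, mul_comm]

theorem laplacian_eq_innerProductSpace_laplacian {f : EuclideanSpace ℝ (Fin 3) → ℝ}
    {x : EuclideanSpace ℝ (Fin 3)} (hf : ContDiffAt ℝ 2 f x) : laplacian f x = Δ f x := by
  have hdiff : DifferentiableAt ℝ (fderiv ℝ f) x :=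
    (hf.fderiv_right (m := 1) (by norm_num)).differentiableAt one_ne_zero
  rw [laplacian, laplacian_eq_sum_fderiv_fderiv f (EuclideanSpace.basisFun (Fin 3) ℝ)]
  refine Finset.sum_congr rfl fun i _ => ?_
  simp [fderiv_clm_apply hdiff (differentiableAt_const _)]

end EuclideanLaplacian

section MaximumPrinciple

variable {Ω : Set E} {w : E → ℝ}

theorem exists_mem_frontier_le_of_laplacian_pos (hΩ : IsOpen Ω) (hbdd : Bornology.IsBounded Ω)
    (hcont : ContinuousOn w (closure Ω)) (hsmooth : ContDiffOn ℝ 2 w Ω)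
    (hpos : ∀ x ∈ Ω, 0 < Δ w x) {x : E} (hx : x ∈ Ω) : ∃ y ∈ frontier Ω, w x ≤ w y := by
  obtain ⟨y, hy, hmax⟩ :=
    hbdd.isCompact_closure.exists_isMaxOn ⟨x, subset_closure hx⟩ hcont
  have hyΩ : y ∉ Ω := fun hyΩ =>
    have hnhds : Ω ∈ 𝓝 y := hΩ.mem_nhds hyΩ
    have hloc : IsLocalMax w y := hmax.isLocalMax (mem_of_superset hnhds subset_closure)
    (laplacian_nonpos_of_isLocalMax (hsmooth.contDiffAt hnhds) hloc).not_gt (hpos y hyΩ)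
  exact ⟨y, hΩ.frontier_eq ▸ ⟨hy, hyΩ⟩, hmax (subset_closure hx)⟩

theorem le_of_forall_mem_frontier_le_of_laplacian_nonneg [Nontrivial E] (hΩ : IsOpen Ω)
    (hbdd : Bornology.IsBounded Ω) (hcont : ContinuousOn w (closure Ω))
    (hsmooth : ContDiffOn ℝ 2 w Ω) (hsub : ∀ x ∈ Ω, 0 ≤ Δ w x) {c : ℝ}
    (hfrontier : ∀ x ∈ frontier Ω, w x ≤ c) {x : E} (hx : x ∈ Ω) : w x ≤ c := by
  obtain ⟨R, hR⟩ := hbdd.closure.exists_norm_le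
  have hnorm : ContDiff ℝ 2 fun y : E => ‖y‖ ^ 2 := contDiff_norm_sq ℝ
  have hbump (ε : ℝ) : ContDiff ℝ 2 (ε • fun y : E => ‖y‖ ^ 2) := hnorm.const_smul ε
  have hperturbed : ∀ ε > 0, w x ≤ c + ε * R ^ 2 := by
    intro ε hε
    have hpos : ∀ y ∈ Ω, 0 < Δ (w + ε • fun y : E => ‖y‖ ^ 2) y := by
      intro y hy
      rw [(hsmooth.contDiffAt (hΩ.mem_nhds hy)).laplacian_add (hbump ε).contDiffAt,
        InnerProductSpace.laplacian_smul ε hnorm.contDiffAt, laplacian_norm_sq, smul_eq_mul]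
      have hdim : (0 : ℝ) < Module.finrank ℝ E := mod_cast Module.finrank_pos
      have := hsub y hy
      positivity
    obtain ⟨y, hy, hle⟩ := exists_mem_frontier_le_of_laplacian_pos hΩ hbdd
      (hcont.add (hbump ε).continuous.continuousOn)
      (hsmooth.add (hbump ε).contDiffOn) hpos hx
    calc w x ≤ w x + ε * ‖x‖ ^ 2 := le_add_of_nonneg_right (by positivity)
      _ ≤ w y + ε * ‖y‖ ^ 2 := hle
      _ ≤ c + ε * R ^ 2 := by
        gcongr
        exacts [hfrontier y hy, hR y (frontier_subset_closure hy)]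
  have hlim : Tendsto (fun ε : ℝ => c + ε * R ^ 2) (𝓝[>] 0) (𝓝 c) :=
    (Continuous.tendsto' (by fun_prop) 0 c (by simp)).mono_left nhdsWithin_le_nhds
  exact ge_of_tendsto hlim (eventually_mem_nhdsWithin.mono hperturbed)

theorem nonpos_of_laplacian_nonneg_of_pos [Nontrivial E] (hΩ : IsOpen Ω)
    (hcont : ContinuousOn w (closure Ω)) (hsmooth : ContDiffOn ℝ 2 w Ω)
    (hsub : ∀ x ∈ Ω, 0 < w x → 0 ≤ Δ w x) (hfrontier : ∀ x ∈ frontier Ω, w x ≤ 0)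
    (hinfty : ∀ c > 0, ∀ᶠ x in cocompact E ⊓ 𝓟 Ω, w x < c) {x : E} (hx : x ∈ Ω) : w x ≤ 0 := by
  refine le_of_forall_pos_le_add fun c hc => ?_
  rw [zero_add]
  by_contra! hxc
  let U : Set E := Ω ∩ w ⁻¹' Ioi c
  have hUΩ : U ⊆ Ω := inter_subset_left
  have hU : IsOpen U := (hcont.mono subset_closure).isOpen_inter_preimage hΩ isOpen_Ioi
  have hbdd : Bornology.IsBounded U := by
    obtain ⟨L, hL, hLc⟩ := mem_cocompact.1 (eventually_inf_principal.1 (hinfty c hc))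
    refine hL.isBounded.subset fun y hy => ?_
    by_contra hyL
    exact lt_asymm (hLc hyL hy.1) hy.2
  have hUfrontier : ∀ y ∈ frontier U, w y ≤ c := by
    intro y hy
    rw [hU.frontier_eq] at hy
    by_cases hyΩ : y ∈ Ω
    · exact not_lt.1 fun hyc => hy.2 ⟨hyΩ, hyc⟩
    · have hyfrontier : y ∈ frontier Ω := hΩ.frontier_eq ▸ ⟨closure_mono hUΩ hy.1, hyΩ⟩
      exact (hfrontier y hyfrontier).trans hc.le
  exact hxc.not_ge <| le_of_forall_mem_frontier_le_of_laplacian_nonneg hU hbdd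
    (hcont.mono (closure_mono hUΩ)) (hsmooth.mono hUΩ)
    (fun y hy => hsub y hy.1 (hc.trans hy.2)) hUfrontier ⟨hx, hxc⟩

end MaximumPrinciple

theorem deift_simon_comparison_general [Nontrivial E] {Ω : Set E} (hΩ : IsOpen Ω)
    {A B u φ : E → ℝ} (hAB : ∀ x ∈ Ω, B x ≤ A x) (hB : ∀ x ∈ Ω, 0 ≤ B x)
    (hu_cont : ContinuousOn u (closure Ω)) (hφ_cont : ContinuousOn φ (closure Ω))
    (hu_smooth : ContDiffOn ℝ 2 u Ω) (hφ_smooth : ContDiffOn ℝ 2 φ Ω)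
    (hu_nonneg : ∀ x ∈ Ω, 0 ≤ u x)
    (hu_sub : ∀ x ∈ Ω, A x * u x ≤ Δ u x) (hφ_super : ∀ x ∈ Ω, Δ φ x ≤ B x * φ x)
    (h_bd : ∀ x ∈ frontier Ω, u x ≤ φ x)
    (h_infty : ∀ c > 0, ∀ᶠ x in cocompact E ⊓ 𝓟 Ω, u x - φ x < c) :
    ∀ x ∈ Ω, u x ≤ φ x := by
  have hsub : ∀ x ∈ Ω, 0 < (u - φ) x → 0 ≤ Δ (u - φ) x := by
    intro x hx hpos
    have hnhds : Ω ∈ 𝓝 x := hΩ.mem_nhds hx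
    calc 0 ≤ (A x - B x) * u x + B x * (u - φ) x :=
          add_nonneg (mul_nonneg (sub_nonneg.2 (hAB x hx)) (hu_nonneg x hx))
            (mul_nonneg (hB x hx) hpos.le)
      _ = A x * u x - B x * φ x := by rw [Pi.sub_apply]; ring
      _ ≤ Δ u x - Δ φ x := sub_le_sub (hu_sub x hx) (hφ_super x hx)
      _ = Δ (u - φ) x :=
          ((hu_smooth.contDiffAt hnhds).laplacian_sub (hφ_smooth.contDiffAt hnhds)).symm
  exact fun x hx => sub_nonpos.1 <| nonpos_of_laplacian_nonneg_of_pos hΩ (hu_cont.sub hφ_cont)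
    (hu_smooth.sub hφ_smooth) hsub (fun y hy => sub_nonpos.2 (h_bd y hy)) h_infty hx

/-- Deift–Simon comparison theorem.  Let `K ⊂ ℝ³` be compact, `A ≥ B ≥ 0`,
and let `u, φ ≥ 0` be continuous on the closure of `ℝ³ \ K`, `C²` on `ℝ³ \ K`, with
`Δu ≥ A u`, `Δφ ≤ B φ` on `ℝ³ \ K`, `u ≤ φ` on `∂K`, and `u, φ → 0` at infinity.
Then `u ≤ φ` on `ℝ³ \ K`. -/
theorem deift_simon_comparison
    (K : Set (EuclideanSpace ℝ (Fin 3))) (hK : IsCompact K)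
    (A B : ℝ) (hAB : B ≤ A) (hB : 0 ≤ B)
    (u φ : EuclideanSpace ℝ (Fin 3) → ℝ)
    (hu_cont : ContinuousOn u (closure Kᶜ)) (hφ_cont : ContinuousOn φ (closure Kᶜ))
    (hu_smooth : ContDiffOn ℝ 2 u Kᶜ) (hφ_smooth : ContDiffOn ℝ 2 φ Kᶜ)
    (hu_nonneg : ∀ x ∈ Kᶜ, 0 ≤ u x) (hφ_nonneg : ∀ x ∈ Kᶜ, 0 ≤ φ x)
    (hu_sub : ∀ x ∈ Kᶜ, A * u x ≤ laplacian u x)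
    (hφ_super : ∀ x ∈ Kᶜ, laplacian φ x ≤ B * φ x)
    (h_bd : ∀ x ∈ frontier K, u x ≤ φ x)
    (hu_decay : Tendsto u (cocompact (EuclideanSpace ℝ (Fin 3))) (nhds 0))
    (hφ_decay : Tendsto φ (cocompact (EuclideanSpace ℝ (Fin 3))) (nhds 0)) :
    ∀ x ∈ Kᶜ, u x ≤ φ x := by
  have hΩ : IsOpen Kᶜ := hK.isClosed.isOpen_compl
  have hlim : Tendsto (fun x => u x - φ x) (cocompact _) (𝓝 0) := by
    simpa using hu_decay.sub hφ_decay
  have hlaplacian {f : EuclideanSpace ℝ (Fin 3) → ℝ} (hf : ContDiffOn ℝ 2 f Kᶜ) :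
      ∀ x ∈ Kᶜ, laplacian f x = Δ f x := fun x hx =>
    laplacian_eq_innerProductSpace_laplacian (hf.contDiffAt (hΩ.mem_nhds hx))
  exact deift_simon_comparison_general hΩ (A := fun _ => A) (B := fun _ => B) (fun _ _ => hAB)
    (fun _ _ => hB) hu_cont hφ_cont hu_smooth hφ_smooth hu_nonneg
    (fun x hx => hlaplacian hu_smooth x hx ▸ hu_sub x hx)
    (fun x hx => hlaplacian hφ_smooth x hx ▸ hφ_super x hx)
    (frontier_compl K ▸ h_bd)
    fun _ hc => (hlim.eventually_lt_const hc).filter_mono inf_le_left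
end

section
/- Let 0 < α₁ ≤ α₂ and C > 0. Let g : ℂ → ℂ be twice continuously differentiable as a map of real Banach spaces (identifying ℂ with ℝ²), with g(0) = 0, Dg(0) = 0, and ‖D²g(z)‖ ≤ C(|z|^{α₁} + |z|^{α₂}) for all z ∈ ℂ, where D and D² denote the first and second real Fréchet derivatives. Then there exists a constant C' > 0, depending only on C, α₁ and α₂, such that for all ψ, u₁, u₂ ∈ ℂ: |g(ψ + u₁) − g(ψ + u₂) − Dg(ψ)(u₁ − u₂)| ≤ C' [ (|ψ|^{α₁} + |ψ|^{α₂})(|u₁| + |u₂|) + |u₁|^{1+α₁} + |u₂|^{1+α₁} + |u₁|^{1+α₂} + |u₂|^{1+α₂} ] · |u₁ − u₂|. -/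
open Complex

/-! By the mean value inequality applied to `Dg`, a bound `M` on `D²g` over the ball of radius
`r = max ‖u₁‖ ‖u₂‖` around `ψ` gives `‖Dg z - Dg ψ‖ ≤ M r` there; applied to `g - Dg ψ`, it then
bounds the increment between `ψ + u₂` and `ψ + u₁` by `M r ‖u₁ - u₂‖`. The growth condition allows
`M = C ((‖ψ‖ + r) ^ α₁ + (‖ψ‖ + r) ^ α₂)`, and `(a + b) ^ α ≤ 2 ^ α (a ^ α + b ^ α)` separates
`‖ψ‖` from `r`. -/

section Rpow

variable {a b c p : ℝ}

lemma add_rpow_le_two_rpow_mul_add_rpow (ha : 0 ≤ a) (hb : 0 ≤ b) (hp : 0 ≤ p) :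
    (a + b) ^ p ≤ 2 ^ p * (a ^ p + b ^ p) := calc
  (a + b) ^ p ≤ (2 * max a b) ^ p := by rw [two_mul]; gcongr <;> simp
  _ = 2 ^ p * max (a ^ p) (b ^ p) := by
    rw [Real.mul_rpow zero_le_two (le_max_of_le_left ha), Real.rpow_max ha hb hp]
  _ ≤ 2 ^ p * (a ^ p + b ^ p) := by
    gcongr
    exact max_le_add_of_nonneg (Real.rpow_nonneg ha p) (Real.rpow_nonneg hb p)

lemma max_rpow_le_add_rpow (hb : 0 ≤ b) (hc : 0 ≤ c) (hp : 0 ≤ p) :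
    max b c ^ p ≤ b ^ p + c ^ p := by
  rw [Real.rpow_max hb hc hp]
  exact max_le_add_of_nonneg (Real.rpow_nonneg hb p) (Real.rpow_nonneg hc p)

lemma add_max_rpow_mul_max_le (ha : 0 ≤ a) (hb : 0 ≤ b) (hc : 0 ≤ c) (hp : 0 ≤ p) :
    (a + max b c) ^ p * max b c ≤
      2 ^ p * (a ^ p * (b + c) + b ^ (1 + p) + c ^ (1 + p)) := by
  have hbc : 0 ≤ max b c := le_max_of_le_left hb
  calc (a + max b c) ^ p * max b c
      ≤ 2 ^ p * (a ^ p + max b c ^ p) * max b c := by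
        gcongr
        exact add_rpow_le_two_rpow_mul_add_rpow ha hbc hp
    _ = 2 ^ p * (a ^ p * max b c + max b c ^ (1 + p)) := by
        rw [Real.rpow_one_add' hbc (by positivity)]; ring
    _ ≤ 2 ^ p * (a ^ p * (b + c) + (b ^ (1 + p) + c ^ (1 + p))) := by
        gcongr
        · exact max_le_add_of_nonneg hb hc
        · exact max_rpow_le_add_rpow hb hc (by positivity)
    _ = 2 ^ p * (a ^ p * (b + c) + b ^ (1 + p) + c ^ (1 + p)) := by ring

end Rpow

lemma norm_fderiv_fderiv_eq_norm_iteratedFDeriv_two {𝕜 E F : Type*} [NontriviallyNormedField 𝕜]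
    [NormedAddCommGroup E] [NormedSpace 𝕜 E] [NormedAddCommGroup F] [NormedSpace 𝕜 F]
    (g : E → F) (x : E) :
    ‖fderiv 𝕜 (fderiv 𝕜 g) x‖ = ‖iteratedFDeriv 𝕜 2 g x‖ := by
  rw [← norm_iteratedFDeriv_one, norm_iteratedFDeriv_fderiv]

section Remainder

variable {𝕜 E F : Type*} [NontriviallyNormedField 𝕜] [IsRCLikeNormedField 𝕜]
  [NormedAddCommGroup E] [NormedSpace ℝ E] [NormedSpace 𝕜 E]
  [NormedAddCommGroup F] [NormedSpace 𝕜 F] {g : E → F}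

lemma norm_sub_sub_fderiv_le_of_norm_fderiv_fderiv_le {x y z : E} {r M : ℝ}
    (hg : ∀ w ∈ Metric.closedBall x r, DifferentiableAt 𝕜 g w)
    (hg' : ∀ w ∈ Metric.closedBall x r, DifferentiableAt 𝕜 (fderiv 𝕜 g) w)
    (hM : ∀ w ∈ Metric.closedBall x r, ‖fderiv 𝕜 (fderiv 𝕜 g) w‖ ≤ M)
    (hy : y ∈ Metric.closedBall x r) (hz : z ∈ Metric.closedBall x r) :
    ‖g y - g z - fderiv 𝕜 g x (y - z)‖ ≤ M * r * ‖y - z‖ := by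
  have hball : Convex ℝ (Metric.closedBall x r) := convex_closedBall x r
  have hx : x ∈ Metric.closedBall x r :=
    Metric.mem_closedBall_self (dist_nonneg.trans (Metric.mem_closedBall.mp hy))
  have hM₀ : 0 ≤ M := (norm_nonneg (fderiv 𝕜 (fderiv 𝕜 g) x)).trans (hM x hx)
  have hvar : ∀ w ∈ Metric.closedBall x r, ‖fderiv 𝕜 g w - fderiv 𝕜 g x‖ ≤ M * r := fun w hw =>
    calc ‖fderiv 𝕜 g w - fderiv 𝕜 g x‖
        ≤ M * ‖w - x‖ := hball.norm_image_sub_le_of_norm_fderiv_le hg' hM hx hw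
      _ ≤ M * r := by gcongr; exact mem_closedBall_iff_norm.mp hw
  exact hball.norm_image_sub_le_of_norm_fderiv_le' hg hvar hz hy

lemma norm_sub_sub_fderiv_le_of_norm_iteratedFDeriv_two_le {α₁ α₂ C : ℝ}
    (hα₁ : 0 ≤ α₁) (hα₂ : 0 ≤ α₂) (hC : 0 ≤ C)
    (hg : Differentiable 𝕜 g) (hg' : Differentiable 𝕜 (fderiv 𝕜 g))
    (hD : ∀ z : E, ‖iteratedFDeriv 𝕜 2 g z‖ ≤ C * (‖z‖ ^ α₁ + ‖z‖ ^ α₂)) {ψ u₁ u₂ : E} {r : ℝ}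
    (hu₁ : ‖u₁‖ ≤ r) (hu₂ : ‖u₂‖ ≤ r) :
    ‖g (ψ + u₁) - g (ψ + u₂) - fderiv 𝕜 g ψ (u₁ - u₂)‖ ≤
      C * ((‖ψ‖ + r) ^ α₁ + (‖ψ‖ + r) ^ α₂) * r * ‖u₁ - u₂‖ := by
  have hM : ∀ z ∈ Metric.closedBall ψ r,
      ‖fderiv 𝕜 (fderiv 𝕜 g) z‖ ≤ C * ((‖ψ‖ + r) ^ α₁ + (‖ψ‖ + r) ^ α₂) := fun z hz => by
    have hz' : ‖z‖ ≤ ‖ψ‖ + r := norm_le_of_mem_closedBall hz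
    calc ‖fderiv 𝕜 (fderiv 𝕜 g) z‖ ≤ C * (‖z‖ ^ α₁ + ‖z‖ ^ α₂) :=
          (norm_fderiv_fderiv_eq_norm_iteratedFDeriv_two g z).trans_le (hD z)
      _ ≤ C * ((‖ψ‖ + r) ^ α₁ + (‖ψ‖ + r) ^ α₂) := by gcongr
  have hball : ∀ u : E, ‖u‖ ≤ r → ψ + u ∈ Metric.closedBall ψ r := fun u hu => by
    rwa [mem_closedBall_iff_norm, add_sub_cancel_left]
  simpa only [add_sub_add_left_eq_sub] using
    norm_sub_sub_fderiv_le_of_norm_fderiv_fderiv_le (fun z _ => hg z) (fun z _ => hg' z) hM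
      (hball u₁ hu₁) (hball u₂ hu₂)

theorem quadratic_remainder_estimate_general {α₁ α₂ C : ℝ} (hα₁ : 0 ≤ α₁) (hα₂ : 0 ≤ α₂)
    (hC : 0 ≤ C) (hg : Differentiable 𝕜 g) (hg' : Differentiable 𝕜 (fderiv 𝕜 g))
    (hD : ∀ z : E, ‖iteratedFDeriv 𝕜 2 g z‖ ≤ C * (‖z‖ ^ α₁ + ‖z‖ ^ α₂)) (ψ u₁ u₂ : E) :
    ‖g (ψ + u₁) - g (ψ + u₂) - fderiv 𝕜 g ψ (u₁ - u₂)‖ ≤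
      C * 2 ^ max α₁ α₂ * ((‖ψ‖ ^ α₁ + ‖ψ‖ ^ α₂) * (‖u₁‖ + ‖u₂‖)
        + ‖u₁‖ ^ (1 + α₁) + ‖u₂‖ ^ (1 + α₁)
        + ‖u₁‖ ^ (1 + α₂) + ‖u₂‖ ^ (1 + α₂)) * ‖u₁ - u₂‖ := by
  set r := max ‖u₁‖ ‖u₂‖
  have hpow : ∀ α, 0 ≤ α → α ≤ max α₁ α₂ → (‖ψ‖ + r) ^ α * r ≤
      2 ^ max α₁ α₂ * (‖ψ‖ ^ α * (‖u₁‖ + ‖u₂‖) + ‖u₁‖ ^ (1 + α) + ‖u₂‖ ^ (1 + α)) :=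
    fun α hα hle =>
      (add_max_rpow_mul_max_le (norm_nonneg _) (norm_nonneg _) (norm_nonneg _) hα).trans
        (by gcongr; exact one_le_two)
  refine (norm_sub_sub_fderiv_le_of_norm_iteratedFDeriv_two_le hα₁ hα₂ hC hg hg' hD
    (le_max_left _ _) (le_max_right _ _)).trans (mul_le_mul_of_nonneg_right ?_ (norm_nonneg _))
  calc C * ((‖ψ‖ + r) ^ α₁ + (‖ψ‖ + r) ^ α₂) * r
      = C * ((‖ψ‖ + r) ^ α₁ * r + (‖ψ‖ + r) ^ α₂ * r) := by ring
    _ ≤ C * (2 ^ max α₁ α₂ * (‖ψ‖ ^ α₁ * (‖u₁‖ + ‖u₂‖) + ‖u₁‖ ^ (1 + α₁) + ‖u₂‖ ^ (1 + α₁))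
          + 2 ^ max α₁ α₂ * (‖ψ‖ ^ α₂ * (‖u₁‖ + ‖u₂‖) + ‖u₁‖ ^ (1 + α₂) + ‖u₂‖ ^ (1 + α₂))) :=
        mul_le_mul_of_nonneg_left
          (add_le_add (hpow α₁ hα₁ (le_max_left _ _)) (hpow α₂ hα₂ (le_max_right _ _))) hC
    _ = _ := by ring

end Remainder

/-- pointwise estimate on the quadratic remainder
`F₂(ψ,u) = g(ψ+u) − g(ψ) − Dg(ψ)u` for a `C²` map `g : ℂ → ℂ` (as a map of real
Banach spaces) with `g(0)=0`, `Dg(0)=0` and `‖D²g(z)‖ ≤ C(|z|^{α₁}+|z|^{α₂})`. -/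
theorem quadratic_remainder_estimate
    (α₁ α₂ C : ℝ) (hα₁ : 0 < α₁) (hα : α₁ ≤ α₂) (hC : 0 < C) :
    ∃ C' : ℝ, 0 < C' ∧
      ∀ g : ℂ → ℂ, ContDiff ℝ 2 g → g 0 = 0 → fderiv ℝ g 0 = 0 →
        (∀ z : ℂ, ‖iteratedFDeriv ℝ 2 g z‖ ≤ C * (‖z‖ ^ α₁ + ‖z‖ ^ α₂)) →
        ∀ ψ u₁ u₂ : ℂ,
          ‖g (ψ + u₁) - g (ψ + u₂) - fderiv ℝ g ψ (u₁ - u₂)‖ ≤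
            C' * ((‖ψ‖ ^ α₁ + ‖ψ‖ ^ α₂) * (‖u₁‖ + ‖u₂‖)
              + ‖u₁‖ ^ (1 + α₁) + ‖u₂‖ ^ (1 + α₁)
              + ‖u₁‖ ^ (1 + α₂) + ‖u₂‖ ^ (1 + α₂)) * ‖u₁ - u₂‖ :=
  ⟨C * 2 ^ max α₁ α₂, by positivity, fun g hg _ _ hD =>
    quadratic_remainder_estimate_general hα₁.le (hα₁.le.trans hα) hC.le
      (hg.differentiable two_ne_zero)
      ((hg.fderiv_right one_add_one_eq_two.le).differentiable one_ne_zero) hD⟩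
end

section
/- Let 0 < a < 1. Then sup_{t ≥ 0} [ (1 + t)^{a} / log(2 + t) ] ∫₀ᵗ (t − s)^{-a} (1 + s)^{-1} ds < ∞. (The integrand has an integrable singularity at s = t since a < 1, so the integral is finite for each t.) -/
open MeasureTheory

/-!
Write `r = -a`. Since `c + t = (c + s) + (t - s)`, multiplying the integrand by `c + t` gives
`(c + t) (t - s) ^ r / (c + s) = (t - s) ^ r + (t - s) ^ (r + 1) / (c + s)`.
The first summand has the exact integral `t ^ (r + 1) / (r + 1)`. In the second the singularity is
gone: `(t - s) ^ (r + 1) ≤ t ^ (r + 1)`, and `1 / (c + s)` integrates to `log ((c + t) / c)`.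
-/

section

variable {a b c r s t : ℝ}

theorem intervalIntegrable_const_sub_rpow (hr : -1 < r) :
    IntervalIntegrable (fun s ↦ (t - s) ^ r) volume a b := by
  simpa using
    (intervalIntegral.intervalIntegrable_rpow' (a := t - a) (b := t - b) hr).comp_sub_left t

theorem integral_const_sub_rpow (hr : -1 < r) :
    ∫ s in a..t, (t - s) ^ r = (t - a) ^ (r + 1) / (r + 1) := by
  rw [intervalIntegral.integral_comp_sub_left (fun x ↦ x ^ r) t, integral_rpow (.inl hr), sub_self,
    Real.zero_rpow (by linarith), sub_zero]

theorem continuousOn_const_add_inv (hc : 0 < c) (ht : 0 ≤ t) :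
    ContinuousOn (fun s ↦ (c + s)⁻¹) (Set.uIcc 0 t) := by
  rw [Set.uIcc_of_le ht]
  exact ContinuousOn.inv₀ (by fun_prop) fun s hs ↦ (add_pos_of_pos_of_nonneg hc hs.1).ne'

theorem integral_const_add_inv (hc : 0 < c) (ht : 0 ≤ t) :
    ∫ s in (0 : ℝ)..t, (c + s)⁻¹ = Real.log ((c + t) / c) := by
  rw [intervalIntegral.integral_comp_add_left (fun x ↦ x⁻¹) c, add_zero,
    integral_inv_of_pos hc (by positivity)]

theorem add_mul_const_sub_rpow_mul_inv (hr : r + 1 ≠ 0) (hst : s ≤ t) (hs : c + s ≠ 0) :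
    (c + t) * ((t - s) ^ r * (c + s)⁻¹) = (t - s) ^ r + (t - s) ^ (r + 1) * (c + s)⁻¹ := by
  rw [Real.rpow_add_one' (sub_nonneg.2 hst) hr]
  field_simp
  ring

theorem integral_const_sub_rpow_mul_inv_le (hr : 0 ≤ r) (hc : 0 < c) (ht : 0 ≤ t) :
    ∫ s in (0 : ℝ)..t, (t - s) ^ r * (c + s)⁻¹ ≤ t ^ r * Real.log ((c + t) / c) := by
  have hinv : ContinuousOn (fun s ↦ (c + s)⁻¹) (Set.uIcc 0 t) := continuousOn_const_add_inv hc ht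
  rw [← integral_const_add_inv hc ht, ← intervalIntegral.integral_const_mul]
  refine intervalIntegral.integral_mono_on ht
    ((intervalIntegrable_const_sub_rpow (by linarith)).mul_continuousOn hinv)
    (hinv.intervalIntegrable.const_mul _) fun s ⟨hs, hst⟩ ↦ ?_
  have hpow : (t - s) ^ r ≤ t ^ r := Real.rpow_le_rpow (sub_nonneg.2 hst) (sub_le_self t hs) hr
  gcongr

theorem add_mul_integral_const_sub_rpow_mul_inv (hr : -1 < r) (hc : 0 < c) (ht : 0 ≤ t) :
    (c + t) * ∫ s in (0 : ℝ)..t, (t - s) ^ r * (c + s)⁻¹ =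
      t ^ (r + 1) / (r + 1) + ∫ s in (0 : ℝ)..t, (t - s) ^ (r + 1) * (c + s)⁻¹ := by
  have hsplit : Set.EqOn (fun s ↦ (c + t) * ((t - s) ^ r * (c + s)⁻¹))
      (fun s ↦ (t - s) ^ r + (t - s) ^ (r + 1) * (c + s)⁻¹) (Set.uIcc 0 t) := by
    rw [Set.uIcc_of_le ht]
    exact fun s ⟨hs, hst⟩ ↦ add_mul_const_sub_rpow_mul_inv (by linarith) hst (by positivity)
  rw [← intervalIntegral.integral_const_mul, intervalIntegral.integral_congr hsplit,
    intervalIntegral.integral_add (intervalIntegrable_const_sub_rpow hr)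
      ((intervalIntegrable_const_sub_rpow (by linarith)).mul_continuousOn
        (continuousOn_const_add_inv hc ht)),
    integral_const_sub_rpow hr, sub_zero]

theorem add_rpow_neg_mul_integral_const_sub_rpow_mul_inv_le
    (hr : -1 < r) (hc : 0 < c) (ht : 0 ≤ t) :
    (c + t) ^ (-r) * ∫ s in (0 : ℝ)..t, (t - s) ^ r * (c + s)⁻¹ ≤
      1 / (r + 1) + Real.log ((c + t) / c) := by
  have hr1 : 0 < r + 1 := by linarith
  have hct : 0 < c + t := by positivity
  have hlog : 0 ≤ Real.log ((c + t) / c) :=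
    Real.log_nonneg ((one_le_div hc).2 (le_add_of_nonneg_right ht))
  have hpow : (c + t) ^ (r + 1) * (c + t) ^ (-r) = c + t := by
    rw [← Real.rpow_add hct, add_neg_cancel_comm, Real.rpow_one]
  refine le_of_mul_le_mul_left ?_ (Real.rpow_pos_of_pos hct (r + 1))
  calc (c + t) ^ (r + 1) * ((c + t) ^ (-r) * ∫ s in (0 : ℝ)..t, (t - s) ^ r * (c + s)⁻¹)
      = t ^ (r + 1) / (r + 1) + ∫ s in (0 : ℝ)..t, (t - s) ^ (r + 1) * (c + s)⁻¹ := by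
        rw [← mul_assoc, hpow, add_mul_integral_const_sub_rpow_mul_inv hr hc ht]
    _ ≤ t ^ (r + 1) / (r + 1) + t ^ (r + 1) * Real.log ((c + t) / c) := by
        gcongr
        exact integral_const_sub_rpow_mul_inv_le hr1.le hc ht
    _ = t ^ (r + 1) * (1 / (r + 1) + Real.log ((c + t) / c)) := by ring
    _ ≤ (c + t) ^ (r + 1) * (1 / (r + 1) + Real.log ((c + t) / c)) := by
        gcongr
        exact le_add_of_nonneg_left hc.le

end

theorem sup_weighted_singular_integral_critical_general {a t : ℝ} (ha : a < 1) (ht : 0 ≤ t) :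
    (1 + t) ^ a / Real.log (2 + t) *
      ∫ s in (0 : ℝ)..t, (t - s) ^ (-a) * (1 + s) ^ (-(1 : ℝ)) ≤
        1 + 1 / ((1 - a) * Real.log 2) := by
  have hlog2 : 0 < Real.log 2 := Real.log_pos one_lt_two
  have hcoeff : 0 < 1 / ((1 - a) * Real.log 2) := one_div_pos.2 (mul_pos (sub_pos.2 ha) hlog2)
  have hlog : 0 < Real.log (2 + t) := Real.log_pos (by linarith)
  have hbound : (1 + t) ^ a * ∫ s in (0 : ℝ)..t, (t - s) ^ (-a) * (1 + s)⁻¹ ≤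
      1 / (1 - a) + Real.log (1 + t) := by
    simpa [neg_add_eq_sub] using
      add_rpow_neg_mul_integral_const_sub_rpow_mul_inv_le (neg_lt_neg ha) one_pos ht
  simp only [Real.rpow_neg_one]
  rw [div_mul_eq_mul_div, div_le_iff₀ hlog]
  calc (1 + t) ^ a * ∫ s in (0 : ℝ)..t, (t - s) ^ (-a) * (1 + s)⁻¹
      ≤ 1 / ((1 - a) * Real.log 2) * Real.log 2 + Real.log (1 + t) := by
        rwa [one_div_mul_eq_div, div_mul_cancel_right₀ hlog2.ne', ← one_div]
    _ ≤ 1 / ((1 - a) * Real.log 2) * Real.log (2 + t) + Real.log (2 + t) :=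
        add_le_add
          (mul_le_mul_of_nonneg_left (Real.log_le_log two_pos (by linarith)) hcoeff.le)
          (Real.log_le_log (by linarith) (by linarith))
    _ = (1 + 1 / ((1 - a) * Real.log 2)) * Real.log (2 + t) := by ring

/-- For `0 < a < 1`,
`sup_{t ≥ 0} (1 + t)^a / log(2 + t) · ∫₀ᵗ (t − s)^{-a} (1 + s)^{-1} ds < ∞`. -/
theorem sup_weighted_singular_integral_critical
    (a : ℝ) (ha0 : 0 < a) (ha1 : a < 1) :
    ∃ M : ℝ, ∀ t : ℝ, 0 ≤ t →
      (1 + t) ^ a / Real.log (2 + t) *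
        ∫ s in (0 : ℝ)..t, (t - s) ^ (-a) * (1 + s) ^ (-(1 : ℝ)) ≤ M :=
  ⟨_, fun _ ht ↦ sup_weighted_singular_integral_critical_general ha1 ht⟩
end
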